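/- Let N ≥ 2, let Ω ⊂ ℝ^N be a nonempty bounded open set, and let p > 2. Then there exists a smooth function u : ℝ^N → ℝ with compact support contained in Ω such that J(u) < 0. -/

import Mathlib

open MeasureTheory Metric Set

/-- The free-boundary energy functional
`J(u) = ∫_Ω [ (1/2)|∇u|² + χ_{u>1} − (1/p)(u−1)₊^p ] dx`. -/
noncomputable def J {N : ℕ} (Ω : Set (EuclideanSpace ℝ (Fin N))) (p : ℝ)
    (u : EuclideanSpace ℝ (Fin N) → ℝ) : ℝ :=
  ∫ x in Ω, ((1 / 2) * ‖gradient u x‖ ^ 2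
    + Set.indicator {y | 1 < u y} (fun _ => (1 : ℝ)) x
    - (1 / p) * (max (u x - 1) 0) ^ p)

/-! Along a ray `t ↦ t φ`, the Dirichlet term grows like `t²` and the measure term is bounded by the
measure of the support of `φ`. If `φ` takes a value larger than `a > 0` in `Ω`, then the last term
grows like `tᵖ`, because `(t φ - 1)₊ ≥ t (φ - a)₊` for `t ≥ 1 / a`. Since `p > 2`, the energy
tends to `-∞`. -/

open Filter Topology

section Real

theorem tendsto_mul_rpow_sub_mul_rpow_atBot {p q : ℝ} (hp : 0 < p) (hqp : q < p) (A : ℝ) {K : ℝ}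
    (hK : 0 < K) : Tendsto (fun t : ℝ ↦ A * t ^ q - K * t ^ p) atTop atBot := by
  have hlim : Tendsto (fun t : ℝ ↦ A * t ^ (-(p - q)) - K) atTop (𝓝 (-K)) := by
    simpa using ((tendsto_rpow_neg_atTop (sub_pos.2 hqp)).const_mul A).sub_const K
  refine ((tendsto_rpow_atTop hp).atTop_mul_neg (neg_neg_of_pos hK) hlim).congr' ?_
  filter_upwards [eventually_gt_atTop 0] with t ht
  have hsplit : t ^ p * t ^ (-(p - q)) = t ^ q := by
    rw [← Real.rpow_add ht]
    congr 1
    ring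
  rw [← hsplit]
  ring

theorem rpow_mul_max_sub_rpow_le {p t a : ℝ} (hp : 0 ≤ p) (ht : 0 ≤ t) (hta : 1 ≤ t * a) (y : ℝ) :
    t ^ p * max (y - a) 0 ^ p ≤ max (t * y - 1) 0 ^ p := by
  rw [← Real.mul_rpow ht (le_max_right _ _), mul_max_of_nonneg _ _ ht, mul_zero, mul_sub]
  gcongr

end Real

section PositivePart

variable {X : Type*} [TopologicalSpace X] {f : X → ℝ} {a p : ℝ}

theorem continuous_max_sub_rpow (hf : Continuous f) (hp : 0 ≤ p) :
    Continuous fun x ↦ max (f x - a) 0 ^ p :=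
  ((hf.sub continuous_const).max continuous_const).rpow_const fun _ ↦ Or.inr hp

variable [MeasurableSpace X] {μ : Measure X}

theorem integrable_max_sub_rpow [OpensMeasurableSpace X] [IsFiniteMeasureOnCompacts μ]
    (hf : Continuous f) (hf_supp : HasCompactSupport f) (ha : 0 ≤ a) (hp : 0 < p) :
    Integrable (fun x ↦ max (f x - a) 0 ^ p) μ :=
  (continuous_max_sub_rpow hf hp.le).integrable_of_hasCompactSupport <|
    hf_supp.comp_left (g := fun y ↦ max (y - a) 0 ^ p) (by simp [ha, Real.zero_rpow hp.ne'])

theorem setIntegral_pos_of_continuous [μ.IsOpenPosMeasure] {U : Set X} (hU : IsOpen U)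
    (hf : Continuous f) (hf_nonneg : 0 ≤ f) (hf_int : IntegrableOn f U μ) {c : X} (hc : c ∈ U)
    (hfc : f c ≠ 0) : 0 < ∫ x in U, f x ∂μ := by
  rw [setIntegral_pos_iff_support_of_nonneg_ae (ae_of_all _ hf_nonneg) hf_int]
  exact (hf.isOpen_support.inter hU).measure_pos μ ⟨c, hfc, hc⟩

end PositivePart

section Gradient

variable {E : Type*} [NormedAddCommGroup E] [InnerProductSpace ℝ E] [CompleteSpace E] {f : E → ℝ}

theorem norm_gradient (f : E → ℝ) (x : E) : ‖gradient f x‖ = ‖fderiv ℝ f x‖ :=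
  LinearIsometryEquiv.norm_map _ _

theorem norm_gradient_const_mul (t : ℝ) {x : E} (hf : DifferentiableAt ℝ f x) :
    ‖gradient (fun y ↦ t * f y) x‖ = |t| * ‖gradient f x‖ := by
  rw [norm_gradient, norm_gradient, fderiv_const_mul hf, norm_smul, Real.norm_eq_abs]

theorem integrable_norm_gradient_sq [MeasurableSpace E] [OpensMeasurableSpace E] {μ : Measure E}
    [IsFiniteMeasureOnCompacts μ] (hf : ContDiff ℝ 1 f) (hf_supp : HasCompactSupport f) :
    Integrable (fun x ↦ ‖gradient f x‖ ^ 2) μ := by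
  simp_rw [norm_gradient]
  have hcont : Continuous fun x ↦ ‖fderiv ℝ f x‖ ^ 2 :=
    (hf.continuous_fderiv one_ne_zero).norm.pow 2
  have hsupp : HasCompactSupport fun x ↦ ‖fderiv ℝ f x‖ ^ 2 :=
    (hf_supp.fderiv ℝ).comp_left (g := fun L ↦ ‖L‖ ^ 2) (by simp)
  exact hcont.integrable_of_hasCompactSupport hsupp

end Gradient

section Energy

variable {N : ℕ} {Ω : Set (EuclideanSpace ℝ (Fin N))} {p : ℝ} {u φ : EuclideanSpace ℝ (Fin N) → ℝ}

theorem J_eq_of_hasCompactSupport (hp : 0 < p) (hu : ContDiff ℝ 1 u)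
    (hu_supp : HasCompactSupport u) :
    J Ω p u = 1 / 2 * (∫ x in Ω, ‖gradient u x‖ ^ 2) + volume.real ({x | 1 < u x} ∩ Ω)
      - 1 / p * ∫ x in Ω, max (u x - 1) 0 ^ p := by
  have hmeas : MeasurableSet {x | 1 < u x} :=
    (isOpen_lt continuous_const hu.continuous).measurableSet
  have hfin : volume.restrict Ω {x | 1 < u x} ≠ ⊤ := by
    refine ((Measure.restrict_apply_le _ _).trans_lt ?_).ne
    refine (measure_mono fun x hx ↦ ?_).trans_lt hu_supp.isCompact.measure_lt_top
    exact subset_tsupport u (zero_lt_one.trans hx).ne'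
  have hgrad := (integrable_norm_gradient_sq (μ := volume.restrict Ω) hu hu_supp).const_mul (1 / 2)
  have hind : Integrable ({x | 1 < u x}.indicator fun _ ↦ (1 : ℝ)) (volume.restrict Ω) :=
    (integrable_indicator_iff hmeas).2 (integrableOn_const hfin)
  have hpow := (integrable_max_sub_rpow (μ := volume.restrict Ω) hu.continuous hu_supp
    zero_le_one hp).const_mul (1 / p)
  rw [J, integral_sub (hgrad.fun_add hind) hpow, integral_add hgrad hind, integral_const_mul,
    integral_const_mul, integral_indicator_const _ hmeas, measureReal_restrict_apply hmeas,
    smul_eq_mul, mul_one]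

theorem J_const_mul_le (hp : 0 < p) (hφ : ContDiff ℝ 1 φ) (hφ_supp : HasCompactSupport φ)
    {a t : ℝ} (ha : 0 < a) (hta : a⁻¹ ≤ t) :
    J Ω p (fun x ↦ t * φ x) ≤
      1 / 2 * (∫ x in Ω, ‖gradient φ x‖ ^ 2) * t ^ 2 + volume.real (tsupport φ)
        - 1 / p * (∫ x in Ω, max (φ x - a) 0 ^ p) * t ^ p := by
  have ht : 0 ≤ t := (inv_pos.2 ha).le.trans hta
  have htφ : ContDiff ℝ 1 fun x ↦ t * φ x := contDiff_const.mul hφ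
  have htφ_supp : HasCompactSupport fun x ↦ t * φ x := hφ_supp.mul_left
  have hgrad : ∫ x in Ω, ‖gradient (fun y ↦ t * φ y) x‖ ^ 2 =
      (∫ x in Ω, ‖gradient φ x‖ ^ 2) * t ^ 2 := by
    simp_rw [fun x ↦ norm_gradient_const_mul t (hφ.differentiable one_ne_zero x), mul_pow, sq_abs,
      integral_const_mul, mul_comm]
  have hvol : volume.real ({x | 1 < t * φ x} ∩ Ω) ≤ volume.real (tsupport φ) := by
    refine measureReal_mono (fun x hx ↦ ?_) hφ_supp.isCompact.measure_ne_top
    exact subset_tsupport φ (right_ne_zero_of_mul (zero_lt_one.trans hx.1).ne')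
  have hpow : (∫ x in Ω, max (φ x - a) 0 ^ p) * t ^ p ≤ ∫ x in Ω, max (t * φ x - 1) 0 ^ p := by
    rw [mul_comm, ← integral_const_mul]
    exact integral_mono ((integrable_max_sub_rpow hφ.continuous hφ_supp ha.le hp).const_mul _)
      (integrable_max_sub_rpow htφ.continuous htφ_supp zero_le_one hp)
      fun x ↦ rpow_mul_max_sub_rpow_le hp.le ht ((inv_le_iff_one_le_mul₀ ha).1 hta) (φ x)
  rw [J_eq_of_hasCompactSupport hp htφ htφ_supp, hgrad, mul_assoc, mul_assoc]
  gcongr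

theorem tendsto_J_const_mul_atBot (hΩ : IsOpen Ω) (hp : 2 < p) (hφ : ContDiff ℝ 1 φ)
    (hφ_supp : HasCompactSupport φ) {c : EuclideanSpace ℝ (Fin N)} (hc : c ∈ Ω) (hφc : 0 < φ c) :
    Tendsto (fun t : ℝ ↦ J Ω p fun x ↦ t * φ x) atTop atBot := by
  have hp0 : 0 < p := two_pos.trans hp
  obtain ⟨a, ha, hac⟩ := exists_between hφc
  have hK : 0 < ∫ x in Ω, max (φ x - a) 0 ^ p :=
    setIntegral_pos_of_continuous hΩ (continuous_max_sub_rpow hφ.continuous hp0.le)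
      (fun x ↦ by positivity)
      (integrable_max_sub_rpow hφ.continuous hφ_supp ha.le hp0).integrableOn hc
      (Real.rpow_pos_of_pos (lt_max_of_lt_left (sub_pos.2 hac)) p).ne'
  have hbound := tendsto_atBot_add_const_right _ (volume.real (tsupport φ)) <|
    tendsto_mul_rpow_sub_mul_rpow_atBot hp0 hp (1 / 2 * ∫ x in Ω, ‖gradient φ x‖ ^ 2)
      (mul_pos (one_div_pos.2 hp0) hK)
  refine tendsto_atBot_mono' _ ?_ hbound
  filter_upwards [eventually_ge_atTop a⁻¹] with t hta
  have hle := J_const_mul_le (Ω := Ω) hp0 hφ hφ_supp ha hta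
  rw [Real.rpow_two]
  linarith

end Energy

theorem stmt_12_general {N : ℕ} {Ω : Set (EuclideanSpace ℝ (Fin N))} (hΩo : IsOpen Ω)
    (hΩne : Ω.Nonempty) {p : ℝ} (hp : 2 < p) :
    ∃ u : EuclideanSpace ℝ (Fin N) → ℝ,
      ContDiff ℝ (⊤ : ℕ∞) u ∧ HasCompactSupport u ∧ tsupport u ⊆ Ω ∧ J Ω p u < 0 := by
  obtain ⟨c, hc⟩ := hΩne
  obtain ⟨φ, hφ_sub, hφ_supp, hφ, -, hφc⟩ :=
    exists_contDiff_tsupport_subset (n := (⊤ : ℕ∞)) (hΩo.mem_nhds hc)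
  have hJ := tendsto_J_const_mul_atBot hΩo hp (hφ.of_le (by simp)) hφ_supp hc
    (hφc ▸ zero_lt_one)
  obtain ⟨t, ht⟩ := (hJ.eventually_lt_atBot 0).exists
  exact ⟨fun x ↦ t * φ x, contDiff_const.mul hφ, hφ_supp.mul_left,
    tsupport_mul_subset_right.trans hφ_sub, ht⟩

theorem stmt_12 {N : ℕ} (hN : 2 ≤ N) (Ω : Set (EuclideanSpace ℝ (Fin N)))
    (hΩo : IsOpen Ω) (hΩb : Bornology.IsBounded Ω) (hΩne : Ω.Nonempty)
    (p : ℝ) (hp : 2 < p) :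
    ∃ u : EuclideanSpace ℝ (Fin N) → ℝ,
      ContDiff ℝ (⊤ : ℕ∞) u ∧ HasCompactSupport u ∧ tsupport u ⊆ Ω ∧ J Ω p u < 0 :=
  stmt_12_general hΩo hΩne hp
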